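/- A simple graph G admits a proper edge-coloring with no rainbow copy of the path P_4 if and only if every connected component of G is a star, or a path, or a cycle of even length, or has at most four vertices. (Characterization part of Proposition on P_4.) -/

import Mathlib

/-!
The frozen condition is first rephrased on vertices (`admissible_iff`): a proper coloring has no
rainbow `P₄` exactly when `ab` and `cd` have equal colors for every path `a - b - c - d`, because
properness already separates the color of `bc` from the other two. This condition is local to a
connected component, so colorings of the components can be glued (`exists_glue`).

If every component has one of the four shapes, label its vertices injectively by naturals and
color an edge by a symmetric function of the labels: the sum for a star (which contains no `P₄`),
an alternating coloring for paths and even cycles (`alternating`), and bitwise xor on `{0,1,2,3}`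
for at most four vertices, which is the decomposition of `K₄` into three perfect matchings.

Conversely, let a component `K` with at least five vertices carry such a coloring. If some vertex
`v` has three neighbors, the configuration `u - w - v` together with two further neighbors `p, q`
of `v` is impossible: the edges `vp` and `vq` would both have the color of `uw`. Hence `v` is
adjacent to all of `K` and, as `K` has at least five vertices, its neighbors are pairwise
nonadjacent, so `K` is a star (`star_or_small`). If all degrees are at most two, a longest path in
`K` spans `K`, and the only possible further edge joins its two ends (`exists_spanning_path`);
so `K` is a path or a cycle. In an odd cycle with at least five vertices, edges at distance two
along the cycle have equal colors, which makes two incident edges have the same color.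
-/

open SimpleGraph

/-- A proper edge-coloring: distinct edges of `G` sharing a vertex get different colors. -/
def IsProperEdgeColoring {V β : Type*} (G : SimpleGraph V) (c : Sym2 V → β) : Prop :=
  ∀ e₁ ∈ G.edgeSet, ∀ e₂ ∈ G.edgeSet, e₁ ≠ e₂ → (∃ v, v ∈ e₁ ∧ v ∈ e₂) → c e₁ ≠ c e₂

/-- `G`, with edge-coloring `c`, contains a rainbow copy of `H`:
a subgraph isomorphic to `H` all of whose edges get pairwise distinct colors. -/
def HasRainbowCopy {V W β : Type*} (G : SimpleGraph V) (c : Sym2 V → β)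
    (H : SimpleGraph W) : Prop :=
  ∃ A : G.Subgraph, Nonempty (A.coe ≃g H) ∧ Set.InjOn c A.edgeSet

/-- The number of copies of `H` in `G`, i.e. the number of subgraphs of `G`
isomorphic to `H`. -/
noncomputable def copyCount {V W : Type*} (G : SimpleGraph V) (H : SimpleGraph W) : ℕ :=
  Set.ncard {A : G.Subgraph | Nonempty (A.coe ≃g H)}

/-- On the vertex set `S` (used for unions of components, which are closed under adjacency), the
coloring `c` is proper and the end edges of every path on four vertices have the same color. -/
def Admissible {V β : Type*} (G : SimpleGraph V) (S : Set V) (c : Sym2 V → β) : Prop :=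
  (∀ x y z, x ∈ S → G.Adj x y → G.Adj y z → x ≠ z → c s(x, y) ≠ c s(y, z)) ∧
  (∀ x y z w, x ∈ S → G.Adj x y → G.Adj y z → G.Adj z w → x ≠ z → x ≠ w → y ≠ w →
    c s(x, y) = c s(z, w))

/-! ### Reformulation on vertices -/

lemma proper_iff {V β : Type*} (G : SimpleGraph V) (c : Sym2 V → β) :
    IsProperEdgeColoring G c ↔
      ∀ x y z, G.Adj x y → G.Adj y z → x ≠ z → c s(x, y) ≠ c s(y, z) := by
  constructor
  · intro h x y z hxy hyz hxz
    refine h _ hxy _ hyz ?_ ⟨y, by simp, by simp⟩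
    intro he
    rw [Sym2.eq_swap, Sym2.congr_right] at he
    exact hxz he
  · rintro h e₁ h₁ e₂ h₂ hne ⟨v, hv₁, hv₂⟩
    obtain ⟨x, rfl⟩ := Sym2.mem_iff_exists.mp hv₁
    obtain ⟨z, rfl⟩ := Sym2.mem_iff_exists.mp hv₂
    have := h x v z (G.mem_edgeSet.mp h₁).symm h₂ (by rintro rfl; exact hne rfl)
    rwa [Sym2.eq_swap] at this

/-- A path on four vertices whose end edges have different colors spans a rainbow copy of `P₄`. -/
lemma rainbow_of_path {V β : Type*} (G : SimpleGraph V) (c : Sym2 V → β)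
    (hc : IsProperEdgeColoring G c) {x y z w : V} (hxy : G.Adj x y) (hyz : G.Adj y z)
    (hzw : G.Adj z w) (hxz : x ≠ z) (hxw : x ≠ w) (hyw : y ≠ w) (hne : c s(x, y) ≠ c s(z, w)) :
    HasRainbowCopy G c (pathGraph 4) := by
  rw [proper_iff] at hc
  let f : Fin 4 → V := ![x, y, z, w]
  have hadj : ∀ i j : Fin 4, (pathGraph 4).Adj i j → G.Adj (f i) (f j) := by
    intro i j h
    rw [pathGraph_adj] at h
    fin_cases i <;> fin_cases j <;> simp [f, G.adj_comm] at h ⊢ <;> assumption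
  have hinj : Function.Injective f := by
    intro i j h
    have h1 := hxy.ne
    have h2 := hyz.ne
    have h3 := hzw.ne
    fin_cases i <;> fin_cases j <;> simp [f] at h ⊢ <;> grind
  let C : Copy (pathGraph 4) G := ⟨⟨f, fun {i j} h => hadj i j h⟩, hinj⟩
  refine ⟨C.toSubgraph, ⟨C.isoToSubgraph.symm⟩, ?_⟩
  have h12 := hc _ _ _ hxy hyz hxz
  have h23 := hc _ _ _ hyz hzw hyw
  have key : ∀ e ∈ C.toSubgraph.edgeSet, e = s(x, y) ∨ e = s(y, z) ∨ e = s(z, w) := by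
    intro e
    induction e with | _ a b => ?_
    rintro ⟨i, j, hij, rfl, rfl⟩
    have hij' : (pathGraph 4).Adj i j := hij
    rw [pathGraph_adj] at hij'
    change s(f i, f j) = _ ∨ s(f i, f j) = _ ∨ s(f i, f j) = _
    fin_cases i <;> fin_cases j <;> simp [f] at hij' ⊢
  intro e₁ h₁ e₂ h₂ he
  rcases key e₁ h₁ with rfl | rfl | rfl <;> rcases key e₂ h₂ with rfl | rfl | rfl <;>
    first | rfl | exact absurd he ‹_› | exact absurd he.symm ‹_›

lemma admissible_iff {V β : Type*} (G : SimpleGraph V) (c : Sym2 V → β) :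
    (IsProperEdgeColoring G c ∧ ¬ HasRainbowCopy G c (pathGraph 4)) ↔
      Admissible G Set.univ c := by
  constructor
  · rintro ⟨hp, hr⟩
    refine ⟨fun x y z _ => (proper_iff G c).mp hp x y z, ?_⟩
    intro x y z w _ hxy hyz hzw h1 h2 h3
    by_contra hne
    exact hr (rainbow_of_path G c hp hxy hyz hzw h1 h2 h3 hne)
  · rintro ⟨hp, hr⟩
    refine ⟨(proper_iff G c).mpr fun x y z => hp x y z trivial, ?_⟩
    rintro ⟨A, ⟨φ⟩, hinj⟩
    have hA : ∀ i j : Fin 4, (pathGraph 4).Adj i j → A.Adj (φ.symm i) (φ.symm j) :=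
      fun i j h => φ.symm.map_rel_iff.mpr h
    have hne : ∀ i j : Fin 4, i ≠ j → (φ.symm i : V) ≠ φ.symm j :=
      fun i j h h' => h (φ.symm.injective (Subtype.ext h'))
    have h01 := hA 0 1 (by simp [pathGraph_adj])
    have h12 := hA 1 2 (by simp [pathGraph_adj])
    have h23 := hA 2 3 (by simp [pathGraph_adj])
    have := hinj (Subgraph.mem_edgeSet.mpr h01) (Subgraph.mem_edgeSet.mpr h23)
      (hr _ _ _ _ trivial h01.adj_sub h12.adj_sub h23.adj_sub (hne 0 2 (by decide))
        (hne 0 3 (by decide)) (hne 1 3 (by decide)))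
    have m := Sym2.mem_mk_left (φ.symm 0 : V) (φ.symm 1 : V)
    rw [this, Sym2.mem_iff] at m
    rcases m with m | m
    · exact hne 0 2 (by decide) m
    · exact hne 0 3 (by decide) m

/-! ### Coloring the four shapes -/

lemma exists_glue {V β : Type*} (G : SimpleGraph V)
    (h : ∀ K : G.ConnectedComponent, ∃ c : Sym2 V → β, Admissible G K.supp c) :
    ∃ c : Sym2 V → β, Admissible G Set.univ c := by
  choose c hc using h
  -- Any endpoint of an edge determines its component, so an arbitrary one may be used.
  have key : ∀ x y, G.Adj x y →
      c (G.connectedComponentMk (s(x, y)).out.1) s(x, y) = c (G.connectedComponentMk x) s(x, y) := by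
    intro x y hxy
    have := Sym2.out_fst_mem s(x, y)
    rw [Sym2.mem_iff] at this
    rcases this with h | h <;> rw [h]
    rw [ConnectedComponent.sound hxy.reachable]
  refine ⟨fun e => c (G.connectedComponentMk e.out.1) e, ?_, ?_⟩
  · intro x y z _ hxy hyz hxz
    simp only
    rw [key x y hxy, key y z hyz, ← ConnectedComponent.sound hxy.reachable]
    exact (hc _).1 x y z rfl hxy hyz hxz
  · intro x y z w _ hxy hyz hzw h1 h2 h3
    simp only
    rw [key x y hxy, key z w hzw, ← ConnectedComponent.sound (hxy.reachable.trans hyz.reachable)]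
    exact (hc _).2 x y z w rfl hxy hyz hzw h1 h2 h3

/-- The edge coloring induced by a vertex labelling `p` and a symmetric function `F` of labels. -/
def labelColoring {V : Type*} (p : V → ℕ) (F : ℕ → ℕ → ℕ) (hF : ∀ i j, F i j = F j i) :
    Sym2 V → ℕ :=
  Sym2.lift ⟨fun x y => F (p x) (p y), fun _ _ => hF _ _⟩

/-- Paths and even cycles: if adjacent vertices have labels that are consecutive modulo `2 * m`,
the edges can be colored alternately. -/
lemma alternating {V : Type*} (G : SimpleGraph V) (S : Set V)
    (hS : ∀ x y, x ∈ S → G.Adj x y → y ∈ S) (m : ℕ) (hm : 2 ≤ m) (p : V → ℕ)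
    (hp : Set.InjOn p S) (hlt : ∀ x ∈ S, p x < 2 * m)
    (hadj : ∀ x y, x ∈ S → G.Adj x y → p x + 1 = p y ∨ p y + 1 = p x ∨
      (p x = 0 ∧ p y + 1 = 2 * m) ∨ (p y = 0 ∧ p x + 1 = 2 * m)) :
    ∃ c : Sym2 V → ℕ, Admissible G S c := by
  -- The edge from `i` to `i + 1` gets color `i % 2`; the closing edge gets color `1`.
  refine ⟨labelColoring p (fun i j => if i + 1 = j ∨ j + 1 = i then min i j % 2 else 1) ?_, ?_, ?_⟩
  · intro i j
    simp only [min_comm i j, or_comm]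
  · intro x y z hx hxy hyz hxz
    have hy := hS _ _ hx hxy
    have hz := hS _ _ hy hyz
    have h1 : p x ≠ p z := fun h => hxz (hp hx hz h)
    have := hadj _ _ hx hxy
    have := hadj _ _ hy hyz
    have := hlt _ hx
    have := hlt _ hy
    have := hlt _ hz
    simp only [labelColoring, Sym2.lift_mk]
    split_ifs <;> omega
  · intro x y z w hx hxy hyz hzw hxz hxw hyw
    have hy := hS _ _ hx hxy
    have hz := hS _ _ hy hyz
    have hw := hS _ _ hz hzw
    have h1 : p x ≠ p z := fun h => hxz (hp hx hz h)
    have h2 : p x ≠ p w := fun h => hxw (hp hx hw h)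
    have h3 : p y ≠ p w := fun h => hyw (hp hy hw h)
    have := hadj _ _ hx hxy
    have := hadj _ _ hy hyz
    have := hadj _ _ hz hzw
    have := hlt _ hx
    have := hlt _ hy
    have := hlt _ hz
    have := hlt _ hw
    simp only [labelColoring, Sym2.lift_mk]
    split_ifs <;> omega

/-- At most four vertices: xor of labels splits the edges of `K₄` into three perfect matchings. -/
lemma small_coloring {V : Type*} (G : SimpleGraph V) (S : Set V)
    (hS : ∀ x y, x ∈ S → G.Adj x y → y ∈ S) (p : V → ℕ)
    (hp : Set.InjOn p S) (hlt : ∀ x ∈ S, p x < 4) :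
    ∃ c : Sym2 V → ℕ, Admissible G S c := by
  refine ⟨labelColoring p (fun i j => i ^^^ j) (fun i j => Nat.xor_comm i j), ?_, ?_⟩
  · intro x y z hx hxy hyz hxz
    have hy := hS _ _ hx hxy
    have hz := hS _ _ hy hyz
    have h1 : p x ≠ p z := fun h => hxz (hp hx hz h)
    simp only [labelColoring, Sym2.lift_mk]
    rw [Nat.xor_comm (p x)]
    exact fun h => h1 (Nat.xor_right_injective h)
  · intro x y z w hx hxy hyz hzw hxz hxw hyw
    have hy := hS _ _ hx hxy
    have hz := hS _ _ hy hyz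
    have hw := hS _ _ hz hzw
    have h1 : p x ≠ p z := fun h => hxz (hp hx hz h)
    have h2 : p x ≠ p w := fun h => hxw (hp hx hw h)
    have h3 : p y ≠ p w := fun h => hyw (hp hy hw h)
    have h4 : p x ≠ p y := fun h => hxy.ne (hp hx hy h)
    have h5 : p y ≠ p z := fun h => hyz.ne (hp hy hz h)
    have h6 : p z ≠ p w := fun h => hzw.ne (hp hz hw h)
    simp only [labelColoring, Sym2.lift_mk]
    have := hlt _ hx
    have := hlt _ hy
    have := hlt _ hz
    have := hlt _ hw
    generalize p x = i, p y = j, p z = k, p w = l at *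
    interval_cases i <;> interval_cases j <;> simp_all <;> interval_cases k <;> simp_all <;>
      interval_cases l <;> simp_all

lemma star_coloring {V : Type*} [Finite V] (G : SimpleGraph V) (S : Set V)
    (hS : ∀ x y, x ∈ S → G.Adj x y → y ∈ S) (v : V)
    (hv : ∀ x y, x ∈ S → G.Adj x y → x = v ∨ y = v) :
    ∃ c : Sym2 V → ℕ, Admissible G S c := by
  obtain ⟨n, ⟨e⟩⟩ := Finite.exists_equiv_fin V
  refine ⟨labelColoring (fun x => (e x : ℕ)) (fun i j => i + j) (fun i j => Nat.add_comm i j),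
    ?_, ?_⟩
  · intro x y z hx hxy hyz hxz
    have : (e x : ℕ) ≠ e z := fun h => hxz (e.injective (Fin.ext h))
    simp only [labelColoring, Sym2.lift_mk]
    omega
  · -- A star contains no path on four vertices.
    intro x y z w hx hxy hyz hzw hxz hxw hyw
    have hy := hS _ _ hx hxy
    have hz := hS _ _ hy hyz
    exfalso
    have h1 := hxy.ne
    have h2 := hzw.ne
    rcases hv _ _ hx hxy with rfl | rfl <;> rcases hv _ _ hz hzw with rfl | rfl <;>
      simp_all

/-- The label of a vertex of `S` under a map `f` on the subtype, extended by `0`. -/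
lemma exists_label {V : Type*} (S : Set V) (f : S → ℕ) :
    ∃ p : V → ℕ, ∀ x : S, p x = f x := by
  classical
  exact ⟨fun x => if h : x ∈ S then f ⟨x, h⟩ else 0, fun x => by simp⟩

lemma fin_sub_val_eq_one {n : ℕ} (u v : Fin n) (h : (u - v).val = 1) :
    v.val + 1 = u.val ∨ (u.val = 0 ∧ v.val + 1 = n) := by
  rw [Fin.sub_def] at h
  simp only at h
  have := u.2
  have := v.2
  rcases lt_or_ge (n - v.val + u.val) n with h' | h'
  · rw [Nat.mod_eq_of_lt h'] at h
    omega
  · rw [Nat.mod_eq_sub_mod h', Nat.mod_eq_of_lt (by omega)] at h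
    omega

lemma exists_coloring {V : Type*} [Finite V] (G : SimpleGraph V) (K : G.ConnectedComponent)
    (h : (∃ p : ℕ, Nonempty ((G.induce K.supp) ≃g completeBipartiteGraph (Fin 1) (Fin p))) ∨
        (∃ m : ℕ, Nonempty ((G.induce K.supp) ≃g pathGraph m)) ∨
        (∃ m : ℕ, 2 ≤ m ∧ Nonempty ((G.induce K.supp) ≃g cycleGraph (2 * m))) ∨
        K.supp.ncard ≤ 4) :
    ∃ c : Sym2 V → ℕ, Admissible G K.supp c := by
  have hS : ∀ x y, x ∈ K.supp → G.Adj x y → y ∈ K.supp :=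
    fun x y hx hxy => K.mem_supp_of_adj_mem_supp hx hxy
  rcases h with ⟨p, ⟨φ⟩⟩ | ⟨m, ⟨φ⟩⟩ | ⟨m, hm, ⟨φ⟩⟩ | h
  · refine star_coloring G _ hS (φ.symm (Sum.inl 0)) ?_
    intro x y hx hxy
    have hadj : (completeBipartiteGraph (Fin 1) (Fin p)).Adj (φ ⟨x, hx⟩) (φ ⟨y, hS _ _ hx hxy⟩) :=
      φ.map_rel_iff.mpr hxy
    have aux : ∀ z : K.supp, (φ z).isLeft → (z : V) = φ.symm (Sum.inl 0) := by
      intro z hz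
      obtain ⟨i, hi⟩ := Sum.isLeft_iff.mp hz
      rw [Subsingleton.elim i 0] at hi
      rw [← hi, RelIso.symm_apply_apply]
    rcases hadj with ⟨h, _⟩ | ⟨_, h⟩
    · exact Or.inl (aux _ h)
    · exact Or.inr (aux _ h)
  · obtain ⟨p, hp⟩ := exists_label K.supp (fun x => (φ x : ℕ))
    refine alternating G _ hS (m + 2) (by omega) p ?_ ?_ ?_
    · intro x hx y hy hxy
      rw [hp ⟨x, hx⟩, hp ⟨y, hy⟩] at hxy
      exact congrArg Subtype.val (φ.injective (Fin.ext hxy))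
    · intro x hx
      rw [hp ⟨x, hx⟩]
      have := (φ ⟨x, hx⟩).2
      omega
    · intro x y hx hxy
      rw [hp ⟨x, hx⟩, hp ⟨y, hS _ _ hx hxy⟩]
      have hadj : (pathGraph m).Adj (φ ⟨x, hx⟩) (φ ⟨y, hS _ _ hx hxy⟩) := φ.map_rel_iff.mpr hxy
      rw [pathGraph_adj] at hadj
      omega
  · obtain ⟨p, hp⟩ := exists_label K.supp (fun x => (φ x : ℕ))
    refine alternating G _ hS m hm p ?_ ?_ ?_
    · intro x hx y hy hxy
      rw [hp ⟨x, hx⟩, hp ⟨y, hy⟩] at hxy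
      exact congrArg Subtype.val (φ.injective (Fin.ext hxy))
    · intro x hx
      rw [hp ⟨x, hx⟩]
      exact (φ ⟨x, hx⟩).2
    · intro x y hx hxy
      rw [hp ⟨x, hx⟩, hp ⟨y, hS _ _ hx hxy⟩]
      have hadj : (cycleGraph (2 * m)).Adj (φ ⟨x, hx⟩) (φ ⟨y, hS _ _ hx hxy⟩) :=
        φ.map_rel_iff.mpr hxy
      rw [cycleGraph_adj'] at hadj
      rcases hadj with h | h <;> have := fin_sub_val_eq_one _ _ h <;> omega
  · obtain ⟨n, ⟨e⟩⟩ := Finite.exists_equiv_fin K.supp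
    have hn : n ≤ 4 := by
      rw [← Nat.card_coe_set_eq, Nat.card_congr e, Nat.card_fin] at h
      exact h
    obtain ⟨p, hp⟩ := exists_label K.supp (fun x => (e x : ℕ))
    refine small_coloring G _ hS p ?_ ?_
    · intro x hx y hy hxy
      rw [hp ⟨x, hx⟩, hp ⟨y, hy⟩] at hxy
      exact congrArg Subtype.val (e.injective (Fin.ext hxy))
    · intro x hx
      rw [hp ⟨x, hx⟩]
      have := (e ⟨x, hx⟩).2
      omega

/-! ### Components with a vertex of degree at least three -/

/-- A set closed under adjacency that meets a component contains it. -/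
lemma closed_of_mem {V : Type*} (G : SimpleGraph V) (K : G.ConnectedComponent) (P : V → Prop)
    {v : V} (hv : v ∈ K.supp) (hP : P v) (hcl : ∀ x y, x ∈ K.supp → P x → G.Adj x y → P y) :
    ∀ w ∈ K.supp, P w := by
  intro w hw
  rw [ConnectedComponent.mem_supp_iff] at hw
  obtain ⟨q⟩ : G.Reachable v w := ConnectedComponent.exact
    (((ConnectedComponent.mem_supp_iff _ _).mp hv).trans hw.symm)
  clear hw
  induction q with
  | nil => exact hP
  | cons h _ ih => exact ih (K.mem_supp_of_adj_mem_supp hv h) (hcl _ _ hv hP h)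

/-- The basic obstruction: both `vp` and `vq` would have the color of `uw`. -/
lemma no_spider {V β : Type*} (G : SimpleGraph V) (c : Sym2 V → β)
    (hc : Admissible G Set.univ c) {u w v p q : V} (huw : G.Adj u w) (hwv : G.Adj w v)
    (hvp : G.Adj v p) (hvq : G.Adj v q) (huv : u ≠ v) (hpq : p ≠ q) (hpu : p ≠ u) (hpw : p ≠ w)
    (hqu : q ≠ u) (hqw : q ≠ w) : False := by
  have h1 := hc.2 u w v p trivial huw hwv hvp huv hpu.symm hpw.symm
  have h2 := hc.2 u w v q trivial huw hwv hvq huv hqu.symm hqw.symm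
  have h3 := hc.1 p v q trivial hvp.symm hvq hpq
  rw [Sym2.eq_swap] at h3
  exact h3 (h1.symm.trans h2)

lemma star_or_small {V β : Type*} [Finite V] (G : SimpleGraph V) (c : Sym2 V → β)
    (hc : Admissible G Set.univ c) (K : G.ConnectedComponent) {v x y z : V} (hv : v ∈ K.supp)
    (hx : G.Adj v x) (hy : G.Adj v y) (hz : G.Adj v z) (hxy : x ≠ y) (hxz : x ≠ z) (hyz : y ≠ z)
    (hcard : ¬ K.supp.ncard ≤ 4) :
    ∃ p : ℕ, Nonempty ((G.induce K.supp) ≃g completeBipartiteGraph (Fin 1) (Fin p)) := by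
  have hdom : ∀ w ∈ K.supp, w = v ∨ G.Adj v w := by
    refine closed_of_mem G K (fun w => w = v ∨ G.Adj v w) hv (Or.inl rfl) ?_
    rintro w u _ (rfl | hw) hwu
    · exact Or.inr hwu
    by_contra hcon
    rw [not_or] at hcon
    obtain ⟨huv, hnu⟩ := hcon
    have hne : ∀ p, G.Adj v p → p ≠ u := by
      rintro p hp rfl
      exact hnu hp
    have key : ∀ p q, G.Adj v p → G.Adj v q → p ≠ q → p ≠ w → q ≠ w → False :=
      fun p q hp hq hpq hpw hqw => no_spider G c hc hwu.symm hw.symm hp hq huv hpq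
        (hne p hp) hpw (hne q hq) hqw
    by_cases hxw : x = w
    · exact key y z hy hz hyz (by rintro rfl; exact hxy hxw) (by rintro rfl; exact hxz hxw)
    by_cases hyw : y = w
    · exact key x z hx hz hxz hxw (by rintro rfl; exact hyz hyw)
    · exact key x y hx hy hxy hxw hyw
  have hex : ∀ a b d : V, ∃ p ∈ K.supp, p ≠ v ∧ p ≠ a ∧ p ≠ b ∧ p ≠ d := by
    intro a b d
    have h4 : ({v, a, b, d} : Set V).ncard < K.supp.ncard := by
      have h1 := Set.ncard_insert_le v ({a, b, d} : Set V)
      have h2 := Set.ncard_insert_le a ({b, d} : Set V)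
      have h3 := Set.ncard_insert_le b ({d} : Set V)
      rw [Set.ncard_singleton] at h3
      omega
    obtain ⟨p, hp, hp'⟩ := Set.exists_mem_notMem_of_ncard_lt_ncard h4
    simp only [Set.mem_insert_iff, Set.mem_singleton_iff, not_or] at hp'
    exact ⟨p, hp, hp'⟩
  have hind : ∀ w u, G.Adj v w → G.Adj v u → ¬ G.Adj w u := by
    intro w u hw hu hwu
    obtain ⟨p, hp, hpv, hpw, hpu, -⟩ := hex w u u
    obtain ⟨q, hq, hqv, hqw, hqu, hqp⟩ := hex w u p
    exact no_spider G c hc hwu.symm hw.symm ((hdom p hp).resolve_left hpv)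
      ((hdom q hq).resolve_left hqv) hu.ne.symm hqp.symm hpu hpw hqu hqw
  classical
  let P : K.supp → Prop := fun w => (w : V) = v
  have : Unique {w : K.supp // P w} :=
    ⟨⟨⟨⟨v, hv⟩, rfl⟩⟩, fun w => Subtype.ext (Subtype.ext w.2)⟩
  obtain ⟨n, ⟨e⟩⟩ := Finite.exists_equiv_fin {w : K.supp // ¬ P w}
  let E : (Fin 1 ⊕ Fin n) ≃ K.supp :=
    (Equiv.sumCongr (Equiv.ofUnique (Fin 1) {w : K.supp // P w}) e.symm).trans (Equiv.sumCompl P)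
  have hl : ∀ i, (E (Sum.inl i) : V) = v :=
    fun i => (Equiv.ofUnique (Fin 1) {w : K.supp // P w} i).2
  have hr : ∀ i, G.Adj v (E (Sum.inr i)) :=
    fun i => (hdom _ (E (Sum.inr i)).2).resolve_left (e.symm i).2
  refine ⟨n, ⟨(RelIso.mk E ?_ : completeBipartiteGraph (Fin 1) (Fin n) ≃g _).symm⟩⟩
  rintro (i | i) (j | j)
  · simp [hl]
  · simp [hl, hr]
  · simp [hl, (hr _).symm]
  · simp [hind _ _ (hr i) (hr j)]

/-! ### Components of maximum degree at most two -/

/-- `f 0 - f 1 - ... - f (m - 1)` is a path on `m` vertices in the component `K`. -/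
def IsPathIn {V : Type*} (G : SimpleGraph V) (K : G.ConnectedComponent) (m : ℕ) (f : ℕ → V) :
    Prop :=
  (∀ i < m, f i ∈ K.supp) ∧ (∀ i < m, ∀ j < m, f i = f j → i = j) ∧
    ∀ i, i + 1 < m → G.Adj (f i) (f (i + 1))

lemma IsPathIn.le_card {V : Type*} [Fintype V] {G : SimpleGraph V} {K : G.ConnectedComponent}
    {m : ℕ} {f : ℕ → V} (h : IsPathIn G K m f) : m ≤ Fintype.card V := by
  have := Fintype.card_le_of_injective (fun i : Fin m => f i)
    (fun i j hij => Fin.ext (h.2.1 _ i.2 _ j.2 hij))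
  simpa using this

/-- A neighbor of the first vertex outside the path extends it. -/
lemma IsPathIn.cons {V : Type*} {G : SimpleGraph V} {K : G.ConnectedComponent}
    {m : ℕ} {f : ℕ → V} (h : IsPathIn G K m f) (hm : 0 < m) {w : V} (hw : G.Adj (f 0) w)
    (hout : ∀ i < m, f i ≠ w) : ∃ g, IsPathIn G K (m + 1) g := by
  refine ⟨fun i => if i = 0 then w else f (i - 1), ?_, ?_, ?_⟩
  · intro i hi
    simp only
    split_ifs with h0
    · exact K.mem_supp_of_adj_mem_supp (h.1 0 hm) hw
    · exact h.1 _ (by omega)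
  · intro i hi j hj hij
    simp only at hij
    split_ifs at hij with h0 h1 h1
    · omega
    · exact absurd hij.symm (hout _ (by omega))
    · exact absurd hij (hout _ (by omega))
    · have := h.2.1 _ (by omega) _ (by omega) hij
      omega
  · intro i hi
    simp only
    rcases i with _ | i
    · simpa using hw.symm
    · simpa using h.2.2 i (by omega)

lemma IsPathIn.reverse {V : Type*} {G : SimpleGraph V} {K : G.ConnectedComponent}
    {m : ℕ} {f : ℕ → V} (h : IsPathIn G K m f) : IsPathIn G K m (fun i => f (m - 1 - i)) := by
  refine ⟨fun i hi => h.1 _ (by omega), ?_, ?_⟩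
  · intro i hi j hj hij
    have := h.2.1 _ (by omega) _ (by omega) hij
    omega
  · intro i hi
    have := h.2.2 (m - 1 - (i + 1)) (by omega)
    rw [show m - 1 - (i + 1) + 1 = m - 1 - i by omega] at this
    exact this.symm

/-- In a component of maximum degree at most two, a longest path is spanning, and it contains all
edges except possibly one joining its ends. -/
lemma exists_spanning_path {V : Type*} [Fintype V] (G : SimpleGraph V) (K : G.ConnectedComponent)
    (hdeg : ∀ v ∈ K.supp, ∀ x y z, G.Adj v x → G.Adj v y → G.Adj v z → x = y ∨ x = z ∨ y = z) :
    ∃ m f, IsPathIn G K m f ∧ (∀ w ∈ K.supp, ∃ i < m, f i = w) ∧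
      ∀ i < m, ∀ j < m, G.Adj (f i) (f j) →
        i + 1 = j ∨ j + 1 = i ∨ (i = 0 ∧ j + 1 = m) ∨ (j = 0 ∧ i + 1 = m) := by
  classical
  obtain ⟨v, hv⟩ := K.nonempty_supp
  have h1 : ∃ f, IsPathIn G K 1 f :=
    ⟨fun _ => v, fun _ _ => hv, fun i hi j hj _ => by omega, fun i hi => by omega⟩
  set m := Nat.findGreatest (fun m => ∃ f, IsPathIn G K m f) (Fintype.card V) with hmdef
  have hcard : 1 ≤ Fintype.card V := h1.choose_spec.le_card
  have hm : 1 ≤ m := Nat.le_findGreatest hcard h1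
  obtain ⟨f, hf⟩ : ∃ f, IsPathIn G K m f :=
    Nat.findGreatest_spec (P := fun m => ∃ f, IsPathIn G K m f) hcard h1
  have hmax : ¬ ∃ g, IsPathIn G K (m + 1) g := by
    rintro ⟨g, hg⟩
    have : m + 1 ≤ m := Nat.le_findGreatest hg.le_card ⟨g, hg⟩
    omega
  have hfirst : ∀ w, G.Adj (f 0) w → ∃ i < m, f i = w := by
    intro w hw
    by_contra! hcon
    exact hmax (hf.cons hm hw hcon)
  have hlast : ∀ w, G.Adj (f (m - 1)) w → ∃ i < m, f i = w := by
    intro w hw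
    by_contra! hcon
    exact hmax (hf.reverse.cons hm (by simpa using hw) fun i hi => hcon _ (by omega))
  -- An interior vertex has its two path neighbors and no other.
  have hmid : ∀ i, i + 2 < m → ∀ w, G.Adj (f (i + 1)) w → w = f i ∨ w = f (i + 2) := by
    intro i hi w hw
    have h0 := (hf.2.2 i (by omega)).symm
    have h2 := hf.2.2 (i + 1) (by omega)
    rcases hdeg _ (hf.1 (i + 1) (by omega)) w (f i) (f (i + 2)) hw h0 h2 with h | h | h
    · exact Or.inl h
    · exact Or.inr h
    · have := hf.2.1 _ (by omega) _ (by omega) h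
      omega
  have hmid' : ∀ i j, 0 < i → i + 1 < m → j < m → G.Adj (f i) (f j) → i + 1 = j ∨ j + 1 = i := by
    intro i j h0 hi hj hij
    obtain ⟨i, rfl⟩ : ∃ k, i = k + 1 := ⟨i - 1, by omega⟩
    rcases hmid i (by omega) _ hij with h | h <;>
      have := hf.2.1 _ (by omega) _ (by omega) h <;> omega
  refine ⟨m, f, hf, ?_, ?_⟩
  · refine closed_of_mem G K (fun w => ∃ i < m, f i = w) (hf.1 0 hm) ⟨0, hm, rfl⟩ ?_
    rintro _ w _ ⟨i, hi, rfl⟩ hw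
    by_cases h0 : i = 0
    · subst h0
      exact hfirst w hw
    by_cases hl : i = m - 1
    · subst hl
      exact hlast w hw
    obtain ⟨i, rfl⟩ : ∃ k, i = k + 1 := ⟨i - 1, by omega⟩
    rcases hmid i (by omega) w hw with h | h
    · exact ⟨i, by omega, h.symm⟩
    · exact ⟨i + 2, by omega, h.symm⟩
  · intro i hi j hj hij
    have hne : i ≠ j := by
      rintro rfl
      exact G.loopless.irrefl _ hij
    by_cases hi' : 0 < i ∧ i + 1 < m
    · have := hmid' i j hi'.1 hi'.2 hj hij
      omega
    by_cases hj' : 0 < j ∧ j + 1 < m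
    · have := hmid' j i hj'.1 hj'.2 hi hij.symm
      omega
    omega

/-- An injective enumeration of the component that matches adjacency in `H` is an isomorphism. -/
lemma iso_of_enum {V : Type*} (G : SimpleGraph V) (K : G.ConnectedComponent) {m : ℕ}
    (H : SimpleGraph (Fin m)) {f : ℕ → V} (hf : IsPathIn G K m f)
    (hsurj : ∀ w ∈ K.supp, ∃ i < m, f i = w)
    (hH : ∀ i j : Fin m, G.Adj (f i) (f j) ↔ H.Adj i j) :
    Nonempty ((G.induce K.supp) ≃g H) := by
  let E : Fin m ≃ K.supp := Equiv.ofBijective (fun i => ⟨f i, hf.1 i i.2⟩) (by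
    constructor
    · intro i j hij
      exact Fin.ext (hf.2.1 _ i.2 _ j.2 (congrArg Subtype.val hij))
    · rintro ⟨w, hw⟩
      obtain ⟨i, hi, rfl⟩ := hsurj w hw
      exact ⟨⟨i, hi⟩, rfl⟩)
  exact ⟨(RelIso.mk E (fun {i j} => hH i j) : H ≃g G.induce K.supp).symm⟩

/-- The first, third, fifth, ... edges of a path all have the same color. -/
lemma color_even {V β : Type*} (G : SimpleGraph V) (c : Sym2 V → β)
    (hc : Admissible G Set.univ c) (K : G.ConnectedComponent) {m : ℕ} {f : ℕ → V}
    (hf : IsPathIn G K m f) (j : ℕ) (hj : 2 * j + 1 < m) :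
    c s(f (2 * j), f (2 * j + 1)) = c s(f 0, f 1) := by
  induction j with
  | zero => rfl
  | succ j ih =>
    rw [← ih (by omega)]
    have hne : ∀ a b, a < m → b < m → a ≠ b → f a ≠ f b :=
      fun a b ha hb hab h => hab (hf.2.1 a ha b hb h)
    exact (hc.2 _ _ _ _ trivial (hf.2.2 (2 * j) (by omega)) (hf.2.2 (2 * j + 1) (by omega))
      (hf.2.2 (2 * j + 2) (by omega)) (hne _ _ (by omega) (by omega) (by omega))
      (hne _ _ (by omega) (by omega) (by omega)) (hne _ _ (by omega) (by omega) (by omega))).symm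

lemma no_odd_cycle {V β : Type*} (G : SimpleGraph V) (c : Sym2 V → β)
    (hc : Admissible G Set.univ c) (K : G.ConnectedComponent) {k : ℕ} {f : ℕ → V}
    (hf : IsPathIn G K (2 * k + 5) f) : ¬ G.Adj (f (2 * k + 4)) (f 0) := by
  intro hcl
  have hne : ∀ a b, a < 2 * k + 5 → b < 2 * k + 5 → a ≠ b → f a ≠ f b :=
    fun a b ha hb hab h => hab (hf.2.1 a ha b hb h)
  have h1 := color_even G c hc K hf (k + 1) (by omega)
  -- The closing edge lies two steps after the edge from `2 * k + 2` to `2 * k + 3`.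
  have h2 := hc.2 _ _ _ _ trivial (hf.2.2 (2 * k + 2) (by omega)) (hf.2.2 (2 * k + 3) (by omega))
    hcl (hne _ _ (by omega) (by omega) (by omega)) (hne _ _ (by omega) (by omega) (by omega))
    (hne _ _ (by omega) (by omega) (by omega))
  exact hc.1 _ _ _ trivial hcl (hf.2.2 0 (by omega)) (hne _ _ (by omega) (by omega) (by omega))
    (h2.symm.trans h1)

lemma cycleGraph_adj_of_val {n : ℕ} (hn : 3 ≤ n) (u v : Fin n) :
    (cycleGraph n).Adj u v ↔ u.val + 1 = v.val ∨ v.val + 1 = u.val ∨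
      (u.val = 0 ∧ v.val + 1 = n) ∨ (v.val = 0 ∧ u.val + 1 = n) := by
  have aux : ∀ a b : Fin n, (b.val + 1 = a.val ∨ (a.val = 0 ∧ b.val + 1 = n)) →
      (a - b).val = 1 := by
    intro a b h
    rw [Fin.sub_def]
    simp only
    have := a.2
    have := b.2
    rcases h with h | ⟨h, h'⟩
    · rw [Nat.mod_eq_sub_mod (by omega), Nat.mod_eq_of_lt (by omega)]
      omega
    · rw [Nat.mod_eq_of_lt (by omega)]
      omega
  rw [cycleGraph_adj']
  constructor
  · rintro (h | h) <;> have := fin_sub_val_eq_one _ _ h <;> omega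
  · rintro (h | h | h | h)
    · exact Or.inr (aux _ _ (Or.inl h))
    · exact Or.inl (aux _ _ (Or.inl h))
    · exact Or.inl (aux _ _ (Or.inr h))
    · exact Or.inr (aux _ _ (Or.inr h))

lemma path_or_cycle {V β : Type*} [Fintype V] (G : SimpleGraph V) (c : Sym2 V → β)
    (hc : Admissible G Set.univ c) (K : G.ConnectedComponent)
    (hdeg : ∀ v ∈ K.supp, ∀ x y z, G.Adj v x → G.Adj v y → G.Adj v z → x = y ∨ x = z ∨ y = z)
    (hcard : ¬ K.supp.ncard ≤ 4) :
    (∃ m : ℕ, Nonempty ((G.induce K.supp) ≃g pathGraph m)) ∨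
      (∃ m : ℕ, 2 ≤ m ∧ Nonempty ((G.induce K.supp) ≃g cycleGraph (2 * m))) := by
  obtain ⟨m, f, hf, hsurj, hadj⟩ := exists_spanning_path G K hdeg
  have hm : 5 ≤ m := by
    obtain ⟨E⟩ := iso_of_enum G K (G.comap fun i : Fin m => f i) hf hsurj (fun _ _ => Iff.rfl)
    rw [← Nat.card_coe_set_eq, Nat.card_congr E.toEquiv, Nat.card_fin] at hcard
    omega
  by_cases hcl : G.Adj (f (m - 1)) (f 0)
  · right
    rcases Nat.even_or_odd' m with ⟨k, rfl | rfl⟩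
    · refine ⟨k, by omega, iso_of_enum G K _ hf hsurj ?_⟩
      intro i j
      rw [cycleGraph_adj_of_val (by omega)]
      refine ⟨hadj i i.2 j j.2, ?_⟩
      rintro (h | h | ⟨h, h'⟩ | ⟨h, h'⟩)
      · rw [← h]
        exact hf.2.2 _ (by omega)
      · rw [← h]
        exact (hf.2.2 _ (by omega)).symm
      · rw [h, show (j : ℕ) = 2 * k - 1 by omega]
        exact hcl.symm
      · rw [h, show (i : ℕ) = 2 * k - 1 by omega]
        exact hcl
    · obtain ⟨k, rfl⟩ : ∃ l, k = l + 2 := ⟨k - 2, by omega⟩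
      exact absurd hcl (no_odd_cycle G c hc K (k := k) hf)
  · refine Or.inl ⟨m, iso_of_enum G K _ hf hsurj ?_⟩
    intro i j
    rw [pathGraph_adj]
    constructor
    · intro hij
      rcases hadj i i.2 j j.2 hij with h | h | ⟨h, h'⟩ | ⟨h, h'⟩
      · exact Or.inl h
      · exact Or.inr h
      · rw [h, show (j : ℕ) = m - 1 by omega] at hij
        exact absurd hij.symm hcl
      · rw [h, show (i : ℕ) = m - 1 by omega] at hij
        exact absurd hij hcl
    · rintro (h | h)
      · rw [← h]
        exact hf.2.2 _ (by omega)
      · rw [← h]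
        exact (hf.2.2 _ (by omega)).symm

/-! ### The characterization -/

/-- A graph admits a proper edge-coloring without a rainbow P₄ iff each of its connected
components is a star, a path, an even cycle, or has at most four vertices. -/
theorem p4_characterization {V : Type*} [Fintype V] (G : SimpleGraph V) :
    (∃ col : Sym2 V → ℕ, IsProperEdgeColoring G col ∧ ¬ HasRainbowCopy G col (pathGraph 4)) ↔
      ∀ K : G.ConnectedComponent,
        (∃ p : ℕ, Nonempty ((G.induce K.supp) ≃g completeBipartiteGraph (Fin 1) (Fin p))) ∨
        (∃ m : ℕ, Nonempty ((G.induce K.supp) ≃g pathGraph m)) ∨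
        (∃ m : ℕ, 2 ≤ m ∧ Nonempty ((G.induce K.supp) ≃g cycleGraph (2 * m))) ∨
        K.supp.ncard ≤ 4 := by
  simp only [admissible_iff]
  constructor
  · rintro ⟨c, hc⟩ K
    by_cases hcard : K.supp.ncard ≤ 4
    · exact Or.inr (Or.inr (Or.inr hcard))
    by_cases hdeg : ∀ v ∈ K.supp, ∀ x y z, G.Adj v x → G.Adj v y → G.Adj v z →
        x = y ∨ x = z ∨ y = z
    · rcases path_or_cycle G c hc K hdeg hcard with h | h
      · exact Or.inr (Or.inl h)
      · exact Or.inr (Or.inr (Or.inl h))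
    · push Not at hdeg
      obtain ⟨v, hv, x, y, z, hx, hy, hz, hxy, hxz, hyz⟩ := hdeg
      exact Or.inl (star_or_small G c hc K hv hx hy hz hxy hxz hyz hcard)
  · intro h
    exact exists_glue G fun K => exists_coloring G K (h K)
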